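/- For all u, v, w ∈ ℝ⁸ one has ‖X(u,v,w)‖² = det G, where G is the 3×3 Gram matrix with entries G₁₁=⟨u,u⟩, G₁₂=⟨u,v⟩, G₁₃=⟨u,w⟩, G₂₂=⟨v,v⟩, G₂₃=⟨v,w⟩, G₃₃=⟨w,w⟩ (and symmetric); i.e. the norm of the triple cross product equals the norm of u ∧ v ∧ w. -/

import Mathlib

noncomputable section

/-- ℝ⁸ with coordinates (x₁,x₂,x₃,x₄,y₁,y₂,y₃,y₄) indexed 0,…,7. -/
abbrev V8 := Fin 8 → ℝ

/-- Standard basis vector. -/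
def e8 (k : Fin 8) : V8 := fun j => if j = k then 1 else 0

/-- The wedge of four coordinate 1-forms, `(e^p ∧ e^q ∧ e^r ∧ e^s)(a,b,c,d)`. -/
def form4 (p q r s : Fin 8) (a b c d : V8) : ℝ :=
  Matrix.det !![a p, a q, a r, a s; b p, b q, b r, b s;
                c p, c q, c r, c s; d p, d q, d r, d s]

/-- The Spin(7) 4-form
Φ = e¹∧e²∧e³∧e⁴ + (e¹∧e² − e³∧e⁴)∧(f¹∧f² − f³∧f⁴)
  + (e¹∧e³ − e⁴∧e²)∧(f¹∧f³ − f⁴∧f²) + (e¹∧e⁴ − e²∧e³)∧(f¹∧f⁴ − f²∧f³)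
  + f¹∧f²∧f³∧f⁴,
with e¹,…,e⁴,f¹,…,f⁴ the coordinate 1-forms indexed 0,1,2,3,4,5,6,7. -/
def Phi8 (a b c d : V8) : ℝ :=
  form4 0 1 2 3 a b c d
    + (form4 0 1 4 5 a b c d - form4 0 1 6 7 a b c d
        - form4 2 3 4 5 a b c d + form4 2 3 6 7 a b c d)
    + (form4 0 2 4 6 a b c d - form4 0 2 7 5 a b c d
        - form4 3 1 4 6 a b c d + form4 3 1 7 5 a b c d)
    + (form4 0 3 4 7 a b c d - form4 0 3 5 6 a b c d
        - form4 1 2 4 7 a b c d + form4 1 2 5 6 a b c d)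
    + form4 4 5 6 7 a b c d

/-- The triple cross product, characterized by ⟨X(u,v,w), z⟩ = Φ(u,v,w,z)
    for the standard inner product; its k-th coordinate is Φ(u,v,w,eₖ). -/
def X8 (a b c : V8) : V8 := fun k => Phi8 a b c (e8 k)

/-- The standard inner product on ℝ⁸. -/
def dot8 (a b : V8) : ℝ := ∑ k, a k * b k

/-- The 3×3 minor. -/
def D8 (p q r : Fin 8) (a b c : V8) : ℝ :=
  a p * (b q * c r - b r * c q) - a q * (b p * c r - b r * c p) + a r * (b p * c q - b q * c p)

theorem form4_eq (p q r s : Fin 8) (a b c d : V8) :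
    form4 p q r s a b c d =
      - D8 q r s a b c * d p + D8 p r s a b c * d q - D8 p q s a b c * d r
        + D8 p q r a b c * d s := by
  simp [form4, D8, Matrix.det_succ_row_zero, Fin.sum_univ_succ, Fin.succAbove]
  ring

theorem X8_0 (u v w : V8) : X8 u v w 0 =
    - D8 1 2 3 u v w - D8 1 4 5 u v w + D8 1 6 7 u v w - D8 2 4 6 u v w + D8 2 7 5 u v w - D8 3 4 7 u v w + D8 3 5 6 u v w := by
  simp [X8, Phi8, form4_eq, e8]
  try ring

theorem X8_1 (u v w : V8) : X8 u v w 1 =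
    D8 0 2 3 u v w + D8 0 4 5 u v w - D8 0 6 7 u v w - D8 3 4 6 u v w + D8 3 7 5 u v w + D8 2 4 7 u v w - D8 2 5 6 u v w := by
  simp [X8, Phi8, form4_eq, e8]
  try ring

theorem X8_2 (u v w : V8) : X8 u v w 2 =
    - D8 0 1 3 u v w + D8 3 4 5 u v w - D8 3 6 7 u v w + D8 0 4 6 u v w - D8 0 7 5 u v w - D8 1 4 7 u v w + D8 1 5 6 u v w := by
  simp [X8, Phi8, form4_eq, e8]
  try ring

theorem X8_3 (u v w : V8) : X8 u v w 3 =
    D8 0 1 2 u v w - D8 2 4 5 u v w + D8 2 6 7 u v w + D8 1 4 6 u v w - D8 1 7 5 u v w + D8 0 4 7 u v w - D8 0 5 6 u v w := by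
  simp [X8, Phi8, form4_eq, e8]
  try ring

theorem X8_4 (u v w : V8) : X8 u v w 4 =
    - D8 0 1 5 u v w + D8 2 3 5 u v w - D8 0 2 6 u v w + D8 3 1 6 u v w - D8 0 3 7 u v w + D8 1 2 7 u v w - D8 5 6 7 u v w := by
  simp [X8, Phi8, form4_eq, e8]
  try ring

theorem X8_5 (u v w : V8) : X8 u v w 5 =
    D8 0 1 4 u v w - D8 2 3 4 u v w - D8 0 2 7 u v w + D8 3 1 7 u v w + D8 0 3 6 u v w - D8 1 2 6 u v w + D8 4 6 7 u v w := by
  simp [X8, Phi8, form4_eq, e8]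
  try ring

theorem X8_6 (u v w : V8) : X8 u v w 6 =
    D8 0 1 7 u v w - D8 2 3 7 u v w + D8 0 2 4 u v w - D8 3 1 4 u v w - D8 0 3 5 u v w + D8 1 2 5 u v w - D8 4 5 7 u v w := by
  simp [X8, Phi8, form4_eq, e8]
  try ring

theorem X8_7 (u v w : V8) : X8 u v w 7 =
    - D8 0 1 6 u v w + D8 2 3 6 u v w + D8 0 2 5 u v w - D8 3 1 5 u v w + D8 0 3 4 u v w - D8 1 2 4 u v w + D8 4 5 6 u v w := by
  simp [X8, Phi8, form4_eq, e8]
  try ring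

set_option maxHeartbeats 0 in
set_option maxRecDepth 100000 in
/-- ‖X(u,v,w)‖² equals the Gram determinant of u, v, w, i.e. the
    norm of the triple cross product equals the norm of u ∧ v ∧ w. -/
theorem stmt6 (u v w : V8) :
    dot8 (X8 u v w) (X8 u v w) =
      Matrix.det !![dot8 u u, dot8 u v, dot8 u w;
                    dot8 u v, dot8 v v, dot8 v w;
                    dot8 u w, dot8 v w, dot8 w w] := by
  simp only [dot8, Matrix.det_fin_three, Fin.sum_univ_eight, X8_0, X8_1, X8_2, X8_3, X8_4, X8_5, X8_6, X8_7]
  simp only [D8, Matrix.of_apply, Matrix.cons_val', Matrix.cons_val_zero, Matrix.cons_val_one, Matrix.cons_val]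
  generalize u 0 = u0
  generalize u 1 = u1
  generalize u 2 = u2
  generalize u 3 = u3
  generalize u 4 = u4
  generalize u 5 = u5
  generalize u 6 = u6
  generalize u 7 = u7
  generalize v 0 = v0
  generalize v 1 = v1
  generalize v 2 = v2
  generalize v 3 = v3
  generalize v 4 = v4
  generalize v 5 = v5
  generalize v 6 = v6
  generalize v 7 = v7
  generalize w 0 = w0
  generalize w 1 = w1
  generalize w 2 = w2
  generalize w 3 = w3
  generalize w 4 = w4
  generalize w 5 = w5
  generalize w 6 = w6
  generalize w 7 = w7
  ring
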